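/- Let H : D → ℝ be symmetric (invariant under every permutation of its three arguments), positively homogeneous of degree 1 (H(tx,ty,tz) = t·H(x,y,z) for all t > 0 and (x,y,z) ∈ D), and satisfy the entropy equation H(x,y,z) = H(x+y,0,z) + H(x,y,0) for all (x,y,z) ∈ D°. Then there exists a function φ : ℝ₊₊ → ℝ satisfying φ(xy) = x·φ(y) + y·φ(x) for all x,y > 0 such that H(x,y,z) = φ(x+y+z) − φ(x) − φ(y) − φ(z) for all (x,y,z) ∈ D°. -/

import Mathlib

/-!
Put `f x y = H x y 0`. On positive arguments the entropy equation reads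
`H x y z = f x y + f (x + y) z`, so the symmetry of `H` makes `f` a symmetric 2-cocycle, homogeneous
of degree 1. The cocycle identity makes the twisted addition
`(a, m) + (b, n) = (a + b, m + n + f a b)` associative, and homogeneity makes the multiplication
`(a, m) * (b, n) = (a * b, a • n + b • m)` distribute over it. Once `f` is extended to all of
`ℝ × ℝ`, this defines a square-zero ring extension of `ℝ`. It splits because `ℝ` is formally smooth
over `ℤ`, and the second component of a ring section `x ↦ (x, φ x)` is the required `φ`.

To extend `f`, write a real number as `x = x⁺ - x⁻` and compare `σ x = (x⁺, 0) - (x⁻, 0)` with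
`σ (x + y)` in the Grothendieck group of the twisted extension over the nonnegative reals: the
defect `σ x + σ y - σ (x + y)` lies in the fibre over `0` and is manifestly a symmetric cocycle.
-/

open Algebra

section Nonneg

open Nonneg

lemma toNonneg_mul_of_nonneg {K : Type*} [Semiring K] [LinearOrder K] [IsOrderedRing K]
    {t : K} (ht : 0 ≤ t) (x : K) :
    toNonneg (t * x) = ⟨t, ht⟩ * toNonneg x :=
  Subtype.ext <| by simp [mul_max_of_nonneg _ _ ht]

lemma toNonneg_add_toNonneg_add_toNonneg_neg {G : Type*} [AddCommGroup G] [LinearOrder G]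
    [IsOrderedAddMonoid G] (x y : G) :
    toNonneg x + toNonneg y + toNonneg (-(x + y)) =
      toNonneg (-x) + toNonneg (-y) + toNonneg (x + y) := by
  apply Subtype.ext
  have hparts (a : G) : max a 0 = max (-a) 0 + a :=
    sub_eq_iff_eq_add'.1 (posPart_sub_negPart a)
  simp only [Nonneg.coe_add, coe_toNonneg]
  rw [hparts x, hparts y, hparts (x + y)]
  abel

end Nonneg

/-- A symmetric 2-cocycle on the additive monoid of the commutative semiring `S`, with values in an
`S`-module and homogeneous of degree 1. It is the twisting datum of `SqZeroExt`. -/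
structure HomogeneousCocycle (S M : Type*) [CommSemiring S] [AddCommGroup M] [Module S M] where
  toFun : S → S → M
  symm : ∀ x y, toFun x y = toFun y x
  cocycle : ∀ x y z, toFun x y + toFun (x + y) z = toFun y z + toFun x (y + z)
  map_mul_mul : ∀ t x y, toFun (t * x) (t * y) = t • toFun x y

namespace HomogeneousCocycle

section CommSemiring

variable {S M : Type*} [CommSemiring S] [AddCommGroup M] [Module S M]

instance : CoeFun (HomogeneousCocycle S M) fun _ ↦ S → S → M := ⟨toFun⟩

variable (c : HomogeneousCocycle S M)

@[simp] lemma zero_left (y : S) : c 0 y = 0 := by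
  have h00 : c 0 0 = 0 := by simpa using c.map_mul_mul 0 0 0
  simpa [h00] using c.cocycle 0 0 y

@[simp] lemma zero_right (x : S) : c x 0 = 0 := by rw [c.symm, c.zero_left]

/-- The square-zero extension of `S` by `M` attached to the cocycle `c`: pairs with addition
twisted by `c` and with the multiplication of the trivial square-zero extension. -/
@[ext]
structure SqZeroExt (c : HomogeneousCocycle S M) where
  fst : S
  snd : M

namespace SqZeroExt

variable {c}

instance : Zero c.SqZeroExt := ⟨⟨0, 0⟩⟩
instance : One c.SqZeroExt := ⟨⟨1, 0⟩⟩
instance : Add c.SqZeroExt := ⟨fun p q ↦ ⟨p.fst + q.fst, p.snd + q.snd + c p.fst q.fst⟩⟩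
instance : Mul c.SqZeroExt := ⟨fun p q ↦ ⟨p.fst * q.fst, p.fst • q.snd + q.fst • p.snd⟩⟩

@[simp] lemma fst_zero : (0 : c.SqZeroExt).fst = 0 := rfl
@[simp] lemma snd_zero : (0 : c.SqZeroExt).snd = 0 := rfl
@[simp] lemma fst_one : (1 : c.SqZeroExt).fst = 1 := rfl
@[simp] lemma snd_one : (1 : c.SqZeroExt).snd = 0 := rfl
@[simp] lemma fst_add (p q : c.SqZeroExt) : (p + q).fst = p.fst + q.fst := rfl
@[simp] lemma snd_add (p q : c.SqZeroExt) : (p + q).snd = p.snd + q.snd + c p.fst q.fst := rfl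
@[simp] lemma fst_mul (p q : c.SqZeroExt) : (p * q).fst = p.fst * q.fst := rfl
@[simp] lemma snd_mul (p q : c.SqZeroExt) : (p * q).snd = p.fst • q.snd + q.fst • p.snd := rfl

protected lemma add_assoc (p q r : c.SqZeroExt) : p + q + r = p + (q + r) := by
  ext
  · simp only [fst_add, add_assoc]
  · calc p.snd + q.snd + c p.fst q.fst + r.snd + c (p.fst + q.fst) r.fst
        = p.snd + q.snd + r.snd + (c p.fst q.fst + c (p.fst + q.fst) r.fst) := by abel
      _ = p.snd + q.snd + r.snd + (c q.fst r.fst + c p.fst (q.fst + r.fst)) := by rw [c.cocycle]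
      _ = p.snd + (q.snd + r.snd + c q.fst r.fst) + c p.fst (q.fst + r.fst) := by abel

protected lemma add_comm (p q : c.SqZeroExt) : p + q = q + p := by
  ext
  · exact add_comm _ _
  · simp only [snd_add, c.symm p.fst, add_comm p.snd]

protected lemma mul_comm (p q : c.SqZeroExt) : p * q = q * p := by
  ext
  · exact mul_comm _ _
  · exact add_comm _ _

protected lemma mul_add (p q r : c.SqZeroExt) : p * (q + r) = p * q + p * r := by
  ext
  · exact mul_add _ _ _
  · simp only [snd_mul, snd_add, fst_add, fst_mul, c.map_mul_mul, smul_add, add_smul]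
    abel

protected lemma mul_assoc (p q r : c.SqZeroExt) : p * q * r = p * (q * r) := by
  ext
  · exact mul_assoc _ _ _
  · simp only [snd_mul, fst_mul, smul_add, smul_smul, mul_comm r.fst, add_assoc]

instance : CommSemiring c.SqZeroExt where
  add_assoc := SqZeroExt.add_assoc
  zero_add _ := by ext <;> simp
  add_zero _ := by ext <;> simp
  add_comm := SqZeroExt.add_comm
  nsmul := nsmulRec
  mul_assoc := SqZeroExt.mul_assoc
  one_mul _ := by ext <;> simp
  mul_one _ := by ext <;> simp
  zero_mul _ := by ext <;> simp
  mul_zero _ := by ext <;> simp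
  left_distrib := SqZeroExt.mul_add
  right_distrib p q r := by simp only [SqZeroExt.mul_comm _ r, SqZeroExt.mul_add]
  mul_comm := SqZeroExt.mul_comm

instance [IsCancelAdd S] : IsCancelAdd c.SqZeroExt :=
  have : IsLeftCancelAdd c.SqZeroExt := ⟨fun p q r h ↦ by
    have hfst : q.fst = r.fst := add_left_cancel (congrArg fst h)
    have hsnd := congrArg snd h
    simp only [snd_add, hfst, add_left_inj, add_right_inj] at hsnd
    exact SqZeroExt.ext hfst hsnd⟩
  AddCommMagma.IsLeftCancelAdd.toIsCancelAdd _

/-- The projection of the extension onto its base. -/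
def fstHom (c : HomogeneousCocycle S M) : c.SqZeroExt →+* S where
  toFun := fst
  map_zero' := rfl
  map_one' := rfl
  map_add' _ _ := rfl
  map_mul' _ _ := rfl

/-- The inclusion of the fibre over `0`. -/
def inr (c : HomogeneousCocycle S M) : M →+ c.SqZeroExt where
  toFun m := ⟨0, m⟩
  map_zero' := rfl
  map_add' _ _ := by ext <;> simp

lemma inr_injective : Function.Injective (inr c) := fun _ _ h ↦ congrArg snd h

lemma mk_add_inr (x : S) (m n : M) : (⟨x, m⟩ : c.SqZeroExt) + inr c n = ⟨x, m + n⟩ := by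
  ext <;> simp [inr]

end SqZeroExt

/-- The second component of `(x, 0) + (y, 0) + (z, 0)` in the extension attached to `c`. -/
def tripleSum (x y z : S) : M := c x y + c (x + y) z

lemma tripleSum_mul (t x y z : S) :
    c.tripleSum (t * x) (t * y) (t * z) = t • c.tripleSum x y z := by
  simp only [tripleSum, ← mul_add, c.map_mul_mul, smul_add]

lemma SqZeroExt.mk_add_mk_add_mk (x y z : S) :
    (⟨x, 0⟩ + ⟨y, 0⟩ + ⟨z, 0⟩ : c.SqZeroExt) = ⟨x + y + z, c.tripleSum x y z⟩ := by
  ext1 <;> simp [tripleSum]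

/-- The inclusion of the fibre over `0` into the Grothendieck group of the extension. -/
def fibreHom : M →+ GrothendieckAddGroup c.SqZeroExt :=
  GrothendieckAddGroup.of.comp (SqZeroExt.inr c)

lemma fibreHom_injective [IsCancelAdd S] : Function.Injective c.fibreHom :=
  GrothendieckAddGroup.of_injective.comp SqZeroExt.inr_injective

end CommSemiring

section CommRing

variable {R M : Type*} [CommRing R] [AddCommGroup M] [Module R M] (c : HomogeneousCocycle R M)

namespace SqZeroExt

instance : Neg c.SqZeroExt := ⟨fun p ↦ ⟨-p.fst, -p.snd - c (-p.fst) p.fst⟩⟩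

instance : CommRing c.SqZeroExt where
  zsmul := zsmulRec
  neg_add_cancel p := by
    ext
    · exact neg_add_cancel p.fst
    · change -p.snd - c (-p.fst) p.fst + p.snd + c (-p.fst) p.fst = 0
      abel

lemma ker_fstHom_sq : RingHom.ker (fstHom c) ^ 2 = ⊥ := by
  rw [sq, eq_bot_iff, Ideal.mul_le]
  intro p (hp : p.fst = 0) q (hq : q.fst = 0)
  rw [Ideal.mem_bot]
  ext <;> simp [hp, hq]

lemma exists_ringHom_section [FormallySmooth ℤ R] :
    ∃ s : R →+* c.SqZeroExt, ∀ x, (s x).fst = x := by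
  let π : c.SqZeroExt →ₐ[ℤ] R := (fstHom c).toIntAlgHom
  have hπ : Function.Surjective π := fun x ↦ ⟨⟨x, 0⟩, rfl⟩
  have hker : IsNilpotent (RingHom.ker π) := ⟨2, ker_fstHom_sq c⟩
  exact ⟨FormallySmooth.liftOfSurjective (AlgHom.id ℤ R) π hπ hker,
    FormallySmooth.liftOfSurjective_apply (AlgHom.id ℤ R) π hπ hker⟩

end SqZeroExt

theorem exists_leibniz_primitive [FormallySmooth ℤ R] :
    ∃ φ : R → M, (∀ x y, φ (x * y) = x • φ y + y • φ x) ∧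
      ∀ x y, φ (x + y) = φ x + φ y + c x y := by
  obtain ⟨s, hs⟩ := SqZeroExt.exists_ringHom_section c
  exact ⟨fun x ↦ (s x).snd, fun x y ↦ by simp [hs], fun x y ↦ by simp [hs]⟩

end CommRing

section OddExtension

open Nonneg

variable {K M : Type*} [CommRing K] [LinearOrder K] [IsOrderedRing K]
  [AddCommGroup M] [Module K M] (c : HomogeneousCocycle {x : K // 0 ≤ x} M)

/-- The values of the extension of `c` from the nonnegative cone to the whole ring; `toNonneg x` and
`toNonneg (-x)` are the positive and negative part of `x`. -/
def oddExtensionFun (x y : K) : M :=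
  c.tripleSum (toNonneg x) (toNonneg y) (toNonneg (-(x + y))) -
    c.tripleSum (toNonneg (-x)) (toNonneg (-y)) (toNonneg (x + y))

lemma oddExtensionFun_neg_neg (x y : K) :
    c.oddExtensionFun (-x) (-y) = -c.oddExtensionFun x y := by
  simp only [oddExtensionFun, ← neg_add, neg_neg, neg_sub]

lemma oddExtensionFun_mul_of_nonneg {t : K} (ht : 0 ≤ t) (x y : K) :
    c.oddExtensionFun (t * x) (t * y) = t • c.oddExtensionFun x y := by
  simp only [oddExtensionFun, ← mul_add, ← mul_neg, toNonneg_mul_of_nonneg ht, tripleSum_mul,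
    smul_sub, mk_smul]

lemma oddExtensionFun_mul (t x y : K) :
    c.oddExtensionFun (t * x) (t * y) = t • c.oddExtensionFun x y := by
  rcases le_total 0 t with ht | ht
  · exact c.oddExtensionFun_mul_of_nonneg ht x y
  · have hneg := c.oddExtensionFun_mul_of_nonneg (neg_nonneg.2 ht) x y
    rwa [neg_mul, neg_mul, oddExtensionFun_neg_neg, neg_smul, neg_inj] at hneg

lemma oddExtensionFun_coe (x y : {x : K // 0 ≤ x}) : c.oddExtensionFun x y = c x y := by
  have toNonneg_neg_coe (z : {x : K // 0 ≤ x}) : toNonneg (-(z : K)) = 0 :=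
    Subtype.ext <| by simpa using z.2
  simp only [oddExtensionFun, tripleSum, ← Nonneg.coe_add, toNonneg_coe, toNonneg_neg_coe,
    zero_left, zero_right, add_zero, sub_zero]

/-- The class of `(x⁺, 0) - (x⁻, 0)` in the Grothendieck group of the extension attached to `c`: a
set-theoretic section over `K`, whose additive defect is `oddExtensionFun`. -/
def signedSection (x : K) : GrothendieckAddGroup c.SqZeroExt :=
  GrothendieckAddGroup.of ⟨toNonneg x, 0⟩ - GrothendieckAddGroup.of ⟨toNonneg (-x), 0⟩

lemma fibreHom_oddExtensionFun (x y : K) :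
    c.fibreHom (c.oddExtensionFun x y) =
      c.signedSection x + c.signedSection y - c.signedSection (x + y) := by
  have hsum : (⟨toNonneg x, 0⟩ + ⟨toNonneg y, 0⟩ + ⟨toNonneg (-(x + y)), 0⟩ : c.SqZeroExt) =
      ⟨toNonneg (-x), 0⟩ + ⟨toNonneg (-y), 0⟩ + ⟨toNonneg (x + y), 0⟩ +
        SqZeroExt.inr c (c.oddExtensionFun x y) := by
    simp only [SqZeroExt.mk_add_mk_add_mk, SqZeroExt.mk_add_inr, oddExtensionFun,
      add_sub_cancel, toNonneg_add_toNonneg_add_toNonneg_neg]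
  have hsum_of := congrArg GrothendieckAddGroup.of hsum
  simp only [map_add] at hsum_of
  simp only [fibreHom, signedSection, AddMonoidHom.comp_apply]
  rw [← sub_eq_iff_eq_add'.2 hsum_of]
  abel

/-- The extension of a cocycle from the nonnegative cone to the whole ordered ring. -/
def oddExtension : HomogeneousCocycle K M where
  toFun := c.oddExtensionFun
  symm x y := c.fibreHom_injective <| by
    rw [fibreHom_oddExtensionFun, fibreHom_oddExtensionFun, add_comm y x]
    abel
  cocycle x y z := c.fibreHom_injective <| by
    simp only [map_add, fibreHom_oddExtensionFun, ← add_assoc]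
    abel
  map_mul_mul := c.oddExtensionFun_mul

end OddExtension

section ExtendByZero

variable {K M : Type*} [CommRing K] [LinearOrder K] [IsStrictOrderedRing K]
  [AddCommGroup M] [Module K M] (f : K → K → M)

/-- A symmetric homogeneous cocycle given on the open positive cone, extended by `0` to the
boundary of the nonnegative cone. -/
def extendByZero (hsymm : ∀ x y, 0 < x → 0 < y → f x y = f y x)
    (hcocycle : ∀ x y z, 0 < x → 0 < y → 0 < z → f x y + f (x + y) z = f y z + f x (y + z))
    (hmul : ∀ t x y, 0 < t → 0 < x → 0 < y → f (t * x) (t * y) = t • f x y) :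
    HomogeneousCocycle {x : K // 0 ≤ x} M where
  toFun x y := if 0 < x ∧ 0 < y then f x y else 0
  symm x y := by
    by_cases hxy : 0 < x ∧ 0 < y
    · rw [if_pos hxy, if_pos hxy.symm, hsymm x y hxy.1 hxy.2]
    · rw [if_neg hxy, if_neg (mt And.symm hxy)]
  cocycle x y z := by
    rcases eq_zero_or_pos x with rfl | hx
    · simp
    rcases eq_zero_or_pos y with rfl | hy
    · simp
    rcases eq_zero_or_pos z with rfl | hz
    · simp
    simpa [hx, hy, hz, add_pos] using hcocycle x y z hx hy hz
  map_mul_mul t x y := by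
    rcases eq_zero_or_pos t with rfl | ht
    · simp
    by_cases hxy : 0 < x ∧ 0 < y
    · simpa [hxy, ht] using hmul t x y ht hxy.1 hxy.2
    · simp [hxy, ht]

theorem exists_leibniz_primitive_of_pos [FormallySmooth ℤ K]
    (hsymm : ∀ x y, 0 < x → 0 < y → f x y = f y x)
    (hcocycle : ∀ x y z, 0 < x → 0 < y → 0 < z → f x y + f (x + y) z = f y z + f x (y + z))
    (hmul : ∀ t x y, 0 < t → 0 < x → 0 < y → f (t * x) (t * y) = t • f x y) :
    ∃ φ : K → M, (∀ x y, φ (x * y) = x • φ y + y • φ x) ∧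
      ∀ x y, 0 < x → 0 < y → φ (x + y) = φ x + φ y + f x y := by
  let c := extendByZero f hsymm hcocycle hmul
  obtain ⟨φ, hφ_mul, hφ_add⟩ := c.oddExtension.exists_leibniz_primitive
  refine ⟨φ, hφ_mul, fun x y hx hy ↦ ?_⟩
  have hc : c.oddExtension x y = f x y :=
    (c.oddExtensionFun_coe ⟨x, hx.le⟩ ⟨y, hy.le⟩).trans (if_pos ⟨hx, hy⟩)
  rw [hφ_add, hc]

end ExtendByZero

end HomogeneousCocycle

theorem formallySmooth_int_of_charZero (K : Type*) [Field K] [CharZero K] : FormallySmooth ℤ K := by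
  have : FormallySmooth ℤ ℚ := .of_isLocalization (nonZeroDivisors ℤ)
  have : FormallySmooth ℚ K := by
    obtain ⟨s, hs⟩ := exists_isTranscendenceBasis ℚ K
    have := hs.isAlgebraic_field
    exact .of_algebraicIndependent_of_isSeparable hs.1
  exact .comp ℤ ℚ K

/-- A solution of the entropy equation that is symmetric and homogeneous of degree 1. As in the
paper, symmetry and homogeneity are required on the closed cone without its apex and the equation on
the open cone; values elsewhere are unconstrained. -/
structure IsEntropySolution {K M : Type*} [CommRing K] [LinearOrder K] [AddCommGroup M] [Module K M]
    (H : K → K → K → M) : Prop where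
  perm : ∀ x y z, 0 ≤ x → 0 ≤ y → 0 ≤ z → 0 < x + y + z → ∀ σ : Equiv.Perm (Fin 3),
    H x y z = H (![x, y, z] (σ 0)) (![x, y, z] (σ 1)) (![x, y, z] (σ 2))
  homogeneous : ∀ t, 0 < t → ∀ x y z, 0 ≤ x → 0 ≤ y → 0 ≤ z → 0 < x + y + z →
    H (t * x) (t * y) (t * z) = t • H x y z
  entropy_eq : ∀ x y z, 0 < x → 0 < y → 0 < z → H x y z = H (x + y) 0 z + H x y 0

namespace IsEntropySolution

variable {K M : Type*} [CommRing K] [LinearOrder K] [AddCommGroup M] [Module K M]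
  {H : K → K → K → M} {x y z : K}

lemma swap_left (hH : IsEntropySolution H) (hx : 0 ≤ x) (hy : 0 ≤ y) (hz : 0 ≤ z)
    (hxyz : 0 < x + y + z) : H x y z = H y x z :=
  hH.perm x y z hx hy hz hxyz (Equiv.swap 0 1)

lemma swap_right (hH : IsEntropySolution H) (hx : 0 ≤ x) (hy : 0 ≤ y) (hz : 0 ≤ z)
    (hxyz : 0 < x + y + z) : H x y z = H x z y :=
  hH.perm x y z hx hy hz hxyz (Equiv.swap 1 2)

variable [IsStrictOrderedRing K]

lemma eq_add_of_pos (hH : IsEntropySolution H) (hx : 0 < x) (hy : 0 < y) (hz : 0 < z) :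
    H x y z = H x y 0 + H (x + y) z 0 := by
  rw [hH.entropy_eq x y z hx hy hz, add_comm,
    hH.swap_right (add_pos hx hy).le le_rfl hz.le (by positivity)]

lemma symm_of_pos (hH : IsEntropySolution H) (hx : 0 < x) (hy : 0 < y) : H x y 0 = H y x 0 :=
  hH.swap_left hx.le hy.le le_rfl (by positivity)

lemma cocycle_of_pos (hH : IsEntropySolution H) (hx : 0 < x) (hy : 0 < y) (hz : 0 < z) :
    H x y 0 + H (x + y) z 0 = H y z 0 + H x (y + z) 0 :=
  calc H x y 0 + H (x + y) z 0
      = H x y z := (hH.eq_add_of_pos hx hy hz).symm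
    _ = H y x z := hH.swap_left hx.le hy.le hz.le (by positivity)
    _ = H y z x := hH.swap_right hy.le hx.le hz.le (by positivity)
    _ = H y z 0 + H (y + z) x 0 := hH.eq_add_of_pos hy hz hx
    _ = H y z 0 + H x (y + z) 0 := by rw [hH.symm_of_pos hx (add_pos hy hz)]

lemma homogeneous_of_pos (hH : IsEntropySolution H) {t : K} (ht : 0 < t) (hx : 0 < x) (hy : 0 < y) :
    H (t * x) (t * y) 0 = t • H x y 0 := by
  simpa using hH.homogeneous t ht x y 0 hx.le hy.le le_rfl (by positivity)

end IsEntropySolution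

theorem entropy_equation_solution_alpha_one_general {K M : Type*}
    [CommRing K] [LinearOrder K] [IsStrictOrderedRing K] [FormallySmooth ℤ K]
    [AddCommGroup M] [Module K M] {H : K → K → K → M} (hH : IsEntropySolution H) :
    ∃ φ : K → M, (∀ x y, φ (x * y) = x • φ y + y • φ x) ∧
      ∀ x y z, 0 < x → 0 < y → 0 < z → H x y z = φ (x + y + z) - φ x - φ y - φ z := by
  obtain ⟨φ, hφ_mul, hφ_add⟩ :=
    HomogeneousCocycle.exists_leibniz_primitive_of_pos (fun x y ↦ H x y 0)
      (fun _ _ ↦ hH.symm_of_pos) (fun _ _ _ ↦ hH.cocycle_of_pos) (fun _ _ _ ↦ hH.homogeneous_of_pos)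
  refine ⟨φ, hφ_mul, fun x y z hx hy hz ↦ ?_⟩
  rw [hH.eq_add_of_pos hx hy hz, hφ_add (x + y) z (add_pos hx hy) hz, hφ_add x y hx hy]
  abel

/-- If `H` is symmetric on `D`, positively homogeneous of degree 1 on `D` and
satisfies the entropy equation on `D°`, then `H(x,y,z) = φ(x+y+z) − φ(x) − φ(y) − φ(z)`
on `D°` for some `φ` with `φ(xy) = x·φ(y) + y·φ(x)`. -/
theorem entropy_equation_solution_alpha_one
    (H : ℝ → ℝ → ℝ → ℝ)
    (hsym : ∀ x y z : ℝ, 0 ≤ x → 0 ≤ y → 0 ≤ z → 0 < x + y + z →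
      ∀ σ : Equiv.Perm (Fin 3),
        H x y z = H (![x, y, z] (σ 0)) (![x, y, z] (σ 1)) (![x, y, z] (σ 2)))
    (hhom : ∀ t : ℝ, 0 < t → ∀ x y z : ℝ, 0 ≤ x → 0 ≤ y → 0 ≤ z → 0 < x + y + z →
      H (t * x) (t * y) (t * z) = t * H x y z)
    (heq : ∀ x y z : ℝ, 0 < x → 0 < y → 0 < z →
      H x y z = H (x + y) 0 z + H x y 0) :
    ∃ φ : ℝ → ℝ,
      (∀ x y : ℝ, 0 < x → 0 < y → φ (x * y) = x * φ y + y * φ x) ∧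
      (∀ x y z : ℝ, 0 < x → 0 < y → 0 < z →
        H x y z = φ (x + y + z) - φ x - φ y - φ z) := by
  have := formallySmooth_int_of_charZero ℝ
  obtain ⟨φ, hφ_mul, hφ⟩ := entropy_equation_solution_alpha_one_general ⟨hsym, hhom, heq⟩
  exact ⟨φ, fun x y _ _ ↦ hφ_mul x y, hφ⟩
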